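/- Assume there is a constant K > 0 such that |Δ(x; b, 1)| ≤ K·x^{1/2}·log x for all integers b ≥ 1 and all x ≥ 2 (this bound holds under the Generalized Riemann Hypothesis). Then for every positive integer λ and every ε > 0 there is a constant C = C(a₁, a₂, λ, ε, K) > 0 such that |Σ_{p ≤ x, p prime} (log g_u(p−1))^λ − P_{u,λ}·π(x)| ≤ C·x^{(6λ+3)/(6λ+4)+ε} for all x ≥ 2, where P_{u,λ} := Σ_{n ≥ 1, gcd(n,a₂)=1} ρ_λ(n)/φ(ℓ(n)). -/

import Mathlib

open scoped BigOperators

/-- `gu u n = gcd(n, u n)`. -/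
noncomputable def gu (u : ℕ → ℤ) (n : ℕ) : ℕ := Int.gcd (n : ℤ) (u n)

/-- Rank of appearance of `m` in the sequence `u`. -/
noncomputable def zu (u : ℕ → ℤ) (m : ℕ) : ℕ := sInf {n : ℕ | 0 < n ∧ (m : ℤ) ∣ u n}

/-- `ℓ(m) = lcm(m, z_u(m))`. -/
noncomputable def ellu (u : ℕ → ℤ) (m : ℕ) : ℕ := Nat.lcm m (zu u m)

/-- The arithmetic function `ρ_λ`. -/
noncomputable def rho (lam n : ℕ) : ℝ :=
  (Nat.factorial lam : ℝ) *
    ∑ f ∈ (Fintype.piFinset fun _ : n.primeFactors => Finset.range (lam + 1)) |>.filter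
        (fun f => ∑ p, f p = lam),
      ∏ p : n.primeFactors,
        (((n.factorization (p : ℕ) : ℝ) ^ f p - ((n.factorization (p : ℕ) : ℝ) - 1) ^ f p) *
          Real.log ((p : ℕ) : ℝ) ^ f p / (Nat.factorial (f p) : ℝ))

/-- The set of primes `≤ x`. -/
noncomputable def primesUpTo (x : ℝ) : Finset ℕ :=
  (Finset.range (⌊x⌋₊ + 1)).filter Nat.Prime

/-- `π(x)`, the number of primes `≤ x`. -/
noncomputable def primePi (x : ℝ) : ℕ := (primesUpTo x).card

/-- `π(x; b, a)`, the number of primes `p ≤ x` with `p ≡ a (mod b)`. -/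
noncomputable def primePiMod (x : ℝ) (b a : ℕ) : ℕ :=
  ((primesUpTo x).filter fun p => p % b = a % b).card

/-- `Δ(x; b, a) = π(x; b, a) - π(x)/φ(b)`. -/
noncomputable def chebErr (x : ℝ) (b a : ℕ) : ℝ :=
  (primePiMod x b a : ℝ) - (primePi x : ℝ) / (Nat.totient b : ℝ)

/-!
Since `ρ_λ = μ * log ^ λ` and `d ∣ gcd(n, u n) ↔ ℓ(d) ∣ n`, the error in the `λ`-th moment is
exactly `∑ d, ρ_λ(d) Δ(x; ℓ(d), 1)`. The assumed bound on `Δ` handles the `d ≤ y`, and the trivial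
bound `|Δ(x; b, 1)| ≤ x / φ(b)` the `d > y`, because `∑ d, d ^ σ ρ_λ(d) / φ(ℓ(d))` converges for
every `σ < 1 / (2 λ + 1)`. Balancing at `y = x ^ ((2 λ + 1) / (4 λ + 4))` gives the exponent
`(4 λ + 3) / (4 λ + 4) + ε`, which is smaller than `(6 λ + 3) / (6 λ + 4) + ε`.

For the convergence, `d` has at most `λ` prime factors, so its largest prime power `q = p ^ k`
satisfies `d ≤ q ^ λ`. Let `w` be the rank of appearance of `p`, which is prime to `p` when `p ∤ Δ`.
Splitting off `g = gcd(d / q, w)`, write `d = q g m`; then `q m w ≤ ℓ(d)`. Summing over `g ∣ w`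
costs only `w ^ η`, and at most `B n` primes have rank `n`, because they all divide `u n` and
`|u n| ≤ A ^ n`.
-/

open Real Finset PowerSeries
open ArithmeticFunction hiding log
open scoped ArithmeticFunction.Moebius

section GrowthBounds

lemma exists_log_pow_le_mul_rpow (k : ℕ) {η : ℝ} (hη : 0 < η) :
    ∃ C : ℝ, 0 < C ∧ ∀ x : ℝ, 1 ≤ x → log x ^ k ≤ C * x ^ η := by
  refine ⟨k.factorial / η ^ k, by positivity, fun x hx => ?_⟩
  have hlog : 0 ≤ log x * η := mul_nonneg (log_nonneg hx) hη.le
  have hexp : (log x * η) ^ k / k.factorial ≤ x ^ η := by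
    rw [rpow_def_of_pos (by linarith)]
    exact pow_div_factorial_le_exp _ hlog k
  rw [div_le_iff₀ (by positivity), mul_pow] at hexp
  rw [div_mul_eq_mul_div, le_div_iff₀ (by positivity)]
  linarith

lemma mul_natCast_add_one_le_pow {δ t : ℝ} (hδ : 0 ≤ δ) (hδ1 : δ ≤ 1) (ht : 1 + δ ≤ t) (k : ℕ) :
    δ * (k + 1) ≤ t ^ k := by
  calc δ * (k + 1) ≤ 1 + k * δ := by linarith
    _ ≤ (1 + δ) ^ k := one_add_mul_le_pow (by linarith) k
    _ ≤ t ^ k := by gcongr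

lemma prod_primeFactors_rpow_pow_factorization {n : ℕ} (hn : n ≠ 0) (η : ℝ) :
    ∏ p ∈ n.primeFactors, ((p : ℝ) ^ η) ^ n.factorization p = (n : ℝ) ^ η := by
  calc ∏ p ∈ n.primeFactors, ((p : ℝ) ^ η) ^ n.factorization p
      = ∏ p ∈ n.primeFactors, ((p : ℝ) ^ n.factorization p) ^ η :=
        prod_congr rfl fun p _ => rpow_pow_comm p.cast_nonneg _ _
    _ = (∏ p ∈ n.primeFactors, (p : ℝ) ^ n.factorization p) ^ η :=
        finsetProd_rpow _ _ (fun _ _ => by positivity) _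
    _ = (n : ℝ) ^ η := by
        congr 1
        exact_mod_cast Nat.prod_factorization_pow_eq_self hn

/-- Only the finitely many primes with `p ^ η < 2` contribute a factor larger than `1` to the
constant. -/
lemma exists_card_divisors_le_mul_rpow {η : ℝ} (hη : 0 < η) :
    ∃ C : ℝ, 0 < C ∧ ∀ n : ℕ, n ≠ 0 → (#n.divisors : ℝ) ≤ C * (n : ℝ) ^ η := by
  set B : ℕ := ⌈(2 : ℝ) ^ η⁻¹⌉₊
  set δ : ℝ := min 1 (2 ^ η - 1)
  have hδ : 0 < δ := lt_min one_pos (sub_pos.mpr (one_lt_rpow one_lt_two hη))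
  have hδ1 : δ ≤ 1 := min_le_left _ _
  have hsmall (p k : ℕ) (hp : 2 ≤ p) : (k + 1 : ℝ) ≤ δ⁻¹ * ((p : ℝ) ^ η) ^ k := by
    rw [le_inv_mul_iff₀ hδ]
    refine mul_natCast_add_one_le_pow hδ.le hδ1 ?_ k
    calc 1 + δ ≤ 2 ^ η := by linarith [min_le_right 1 ((2 : ℝ) ^ η - 1)]
      _ ≤ (p : ℝ) ^ η := by gcongr; exact_mod_cast hp
  have hlarge (p k : ℕ) (hp : B ≤ p) : (k + 1 : ℝ) ≤ ((p : ℝ) ^ η) ^ k := by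
    have hp2 : 2 ≤ (p : ℝ) ^ η := by
      rw [← rpow_inv_le_iff_of_pos zero_le_two p.cast_nonneg hη]
      exact (Nat.le_ceil _).trans (by exact_mod_cast hp)
    simpa using mul_natCast_add_one_le_pow zero_le_one le_rfl (by linarith) k
  refine ⟨δ⁻¹ ^ B, by positivity, fun n hn => ?_⟩
  calc (#n.divisors : ℝ) = ∏ p ∈ n.primeFactors, (n.factorization p + 1 : ℝ) := by
        exact_mod_cast Nat.card_divisors hn
    _ ≤ ∏ p ∈ n.primeFactors, ((if p < B then δ⁻¹ else 1) *
          ((p : ℝ) ^ η) ^ n.factorization p) := by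
        refine prod_le_prod (fun _ _ => by positivity) fun p hp => ?_
        split_ifs with hpB
        · exact hsmall p _ (Nat.prime_of_mem_primeFactors hp).two_le
        · simpa using hlarge p _ (not_lt.mp hpB)
    _ = δ⁻¹ ^ #{p ∈ n.primeFactors | p < B} * (n : ℝ) ^ η := by
        rw [prod_mul_distrib, prod_primeFactors_rpow_pow_factorization hn, ← prod_filter,
          prod_const]
    _ ≤ δ⁻¹ ^ B * (n : ℝ) ^ η := by
        have hcard : #{p ∈ n.primeFactors | p < B} ≤ B := by
          calc #{p ∈ n.primeFactors | p < B} ≤ #(range B) :=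
                card_le_card fun p hp => mem_range.mpr (mem_filter.mp hp).2
            _ = B := card_range B
        gcongr
        exact (one_le_inv₀ hδ).mpr hδ1

lemma le_card_divisors_mul_totient (n : ℕ) : n ≤ #n.divisors * n.totient := by
  calc n = ∑ d ∈ n.divisors, d.totient := n.sum_totient.symm
    _ ≤ #n.divisors • n.totient := sum_le_card_nsmul _ _ _ fun d hd =>
        Nat.le_of_dvd (Nat.totient_pos.mpr (Nat.pos_of_ne_zero (Nat.mem_divisors.mp hd).2))
          (Nat.totient_dvd_of_dvd (Nat.dvd_of_mem_divisors hd))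

lemma exists_inv_totient_le_mul_rpow {η : ℝ} (hη : 0 < η) :
    ∃ C : ℝ, 0 < C ∧ ∀ n : ℕ, n ≠ 0 → (n.totient : ℝ)⁻¹ ≤ C * (n : ℝ) ^ (η - 1) := by
  obtain ⟨C, hC, hdiv⟩ := exists_card_divisors_le_mul_rpow hη
  refine ⟨C, hC, fun n hn => ?_⟩
  have hn' : (0 : ℝ) < n := by positivity
  have hφ : (0 : ℝ) < n.totient := by exact_mod_cast Nat.totient_pos.mpr (Nat.pos_of_ne_zero hn)
  rw [rpow_sub_one hn'.ne', inv_le_iff_one_le_mul₀ hφ, mul_div_assoc', div_mul_eq_mul_div,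
    one_le_div hn']
  calc (n : ℝ) ≤ #n.divisors * n.totient := by exact_mod_cast le_card_divisors_mul_totient n
    _ ≤ C * (n : ℝ) ^ η * n.totient := by gcongr; exact hdiv n hn

end GrowthBounds

section Rho

/-- The exponential series `exp (c X)`. -/
noncomputable def expSeries (c : ℝ) : ℝ⟦X⟧ := rescale c (PowerSeries.exp ℝ)

lemma coeff_expSeries (c : ℝ) (k : ℕ) : coeff k (expSeries c) = c ^ k / k.factorial := by
  simp [expSeries, coeff_rescale, coeff_exp, div_eq_mul_inv]

lemma expSeries_add (a b : ℝ) : expSeries (a + b) = expSeries a * expSeries b :=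
  (exp_mul_exp_eq_exp_add a b).symm

lemma expSeries_zero : expSeries 0 = 1 := by
  simp [expSeries, rescale_zero]

/-- The exponential generating function `∑ λ, (log n) ^ λ X ^ λ / λ! = n ^ X` of the powers of the
logarithm, as an arithmetic function of `n`. -/
noncomputable def logPowSeries : ArithmeticFunction ℝ⟦X⟧ :=
  ⟨fun n => if n = 0 then 0 else expSeries (log n), if_pos rfl⟩

/-- The exponential generating function of the `ρ_λ`. Defining it as a Dirichlet convolution gives
its divisor sums and its multiplicativity for free. -/
noncomputable def rhoSeries : ArithmeticFunction ℝ⟦X⟧ :=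
  (μ : ArithmeticFunction ℝ⟦X⟧) * logPowSeries

lemma logPowSeries_apply {n : ℕ} (hn : n ≠ 0) : logPowSeries n = expSeries (log n) :=
  if_neg hn

lemma isMultiplicative_logPowSeries : logPowSeries.IsMultiplicative := by
  refine IsMultiplicative.iff_ne_zero.mpr
    ⟨by simp [logPowSeries_apply, expSeries_zero], fun {m n} hm hn _ => ?_⟩
  rw [logPowSeries_apply hm, logPowSeries_apply hn, logPowSeries_apply (mul_ne_zero hm hn),
    Nat.cast_mul, log_mul (by positivity) (by positivity), expSeries_add]

lemma isMultiplicative_rhoSeries : rhoSeries.IsMultiplicative :=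
  isMultiplicative_moebius.intCast.mul isMultiplicative_logPowSeries

lemma sum_divisors_rhoSeries (n : ℕ) : ∑ d ∈ n.divisors, rhoSeries d = logPowSeries n := by
  rw [← coe_zeta_mul_apply, rhoSeries, ← mul_assoc, coe_zeta_mul_coe_moebius, one_mul]

lemma rhoSeries_prime_pow {p k : ℕ} (hp : p.Prime) (hk : k ≠ 0) :
    rhoSeries (p ^ k) = expSeries (k * log p) - expSeries ((k - 1) * log p) := by
  obtain ⟨k, rfl⟩ := Nat.exists_eq_succ_of_ne_zero hk
  have hsum (j : ℕ) : ∑ i ∈ range (j + 1), rhoSeries (p ^ i) = expSeries (j * log p) := by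
    rw [← Nat.sum_divisors_prime_pow hp, sum_divisors_rhoSeries,
      logPowSeries_apply (pow_ne_zero _ hp.ne_zero), Nat.cast_pow, log_pow]
  have := hsum (k + 1)
  rw [sum_range_succ, hsum k] at this
  simpa using eq_sub_of_add_eq' this

lemma rhoSeries_apply {n : ℕ} (hn : n ≠ 0) :
    rhoSeries n = ∏ p ∈ n.primeFactors,
      (expSeries (n.factorization p * log p) - expSeries ((n.factorization p - 1) * log p)) := by
  rw [isMultiplicative_rhoSeries.multiplicative_factorization _ hn,
    Nat.prod_factorization_eq_prod_primeFactors]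
  refine prod_congr rfl fun p hp => rhoSeries_prime_pow (Nat.prime_of_mem_primeFactors hp) ?_
  exact Finsupp.mem_support_iff.mp hp

lemma rho_eq_factorial_mul_coeff (lam : ℕ) {n : ℕ} (hn : n ≠ 0) :
    rho lam n = lam.factorial * coeff lam (rhoSeries n) := by
  classical
  rw [rhoSeries_apply hn, rho, ← prod_coe_sort n.primeFactors, coeff_prod]
  congr 1
  refine sum_bij' (fun f _ => Finsupp.equivFunOnFinite.symm f) (fun g _ => ⇑g)
    (fun f hf => ?_) (fun g hg => ?_) (fun _ _ => rfl) (fun _ _ => by simp) fun f _ => ?_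
  · simpa [mem_finsuppAntidiag] using (mem_filter.mp hf).2
  · simp only [mem_finsuppAntidiag] at hg
    simp only [mem_filter, Fintype.mem_piFinset, mem_range, Nat.lt_succ_iff]
    refine ⟨fun p => ?_, hg.1⟩
    rw [← hg.1]
    exact single_le_sum (fun _ _ => Nat.zero_le _) (mem_univ p)
  · refine prod_congr rfl fun p _ => ?_
    simp only [map_sub, coeff_expSeries, Finsupp.equivFunOnFinite_symm_apply_apply, mul_pow]
    ring

theorem sum_divisors_rho (lam : ℕ) {n : ℕ} (hn : n ≠ 0) :
    ∑ d ∈ n.divisors, rho lam d = log n ^ lam := by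
  have hrho : ∀ d ∈ n.divisors, rho lam d = lam.factorial * coeff lam (rhoSeries d) :=
    fun d hd => rho_eq_factorial_mul_coeff lam (Nat.pos_of_mem_divisors hd).ne'
  rw [sum_congr rfl hrho, ← mul_sum, ← map_sum, sum_divisors_rhoSeries, logPowSeries_apply hn,
    coeff_expSeries]
  field_simp

lemma rho_nonneg (lam n : ℕ) : 0 ≤ rho lam n := by
  refine mul_nonneg (Nat.cast_nonneg _) (sum_nonneg fun f _ => prod_nonneg fun p _ => ?_)
  have hv : (1 : ℝ) ≤ n.factorization p := by
    exact_mod_cast Nat.one_le_iff_ne_zero.mpr (Finsupp.mem_support_iff.mp p.2)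
  have hpow : ((n.factorization p : ℝ) - 1) ^ f p ≤ (n.factorization p : ℝ) ^ f p :=
    pow_le_pow_left₀ (by linarith) (by linarith) _
  have := sub_nonneg.mpr hpow
  have := log_natCast_nonneg p
  positivity

lemma rho_le_log_pow (lam : ℕ) {n : ℕ} (hn : n ≠ 0) : rho lam n ≤ log n ^ lam := by
  rw [← sum_divisors_rho lam hn]
  exact single_le_sum (fun d _ => rho_nonneg lam d) (Nat.mem_divisors_self n hn)

lemma rho_one {lam : ℕ} (hlam : lam ≠ 0) : rho lam 1 = 0 := by
  simpa [hlam] using sum_divisors_rho lam one_ne_zero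

lemma card_primeFactors_le_of_rho_ne_zero {lam n : ℕ} (h : rho lam n ≠ 0) :
    #n.primeFactors ≤ lam := by
  obtain ⟨f, hf, hprod⟩ := exists_ne_zero_of_sum_ne_zero (right_ne_zero_of_mul h)
  have hpos : ∀ p ∈ univ, 1 ≤ f p := fun p hp => Nat.one_le_iff_ne_zero.mpr fun h0 =>
    prod_ne_zero_iff.mp hprod p hp (by simp [h0])
  calc #n.primeFactors = #(univ : Finset n.primeFactors) * 1 := by simp
    _ ≤ ∑ p, f p := card_nsmul_le_sum univ f 1 hpos
    _ = lam := (mem_filter.mp hf).2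

end Rho

section Lucas

/-- `u` is the Lucas sequence with parameters `a₁`, `a₂`. The ring is arbitrary so that the sequence
can be mapped to fields over which its characteristic polynomial splits. -/
structure IsLucasSequence {R : Type*} [CommRing R] (a₁ a₂ : R) (u : ℕ → R) : Prop where
  zero : u 0 = 0
  one : u 1 = 1
  add_two : ∀ n, u (n + 2) = a₁ * u (n + 1) + a₂ * u n

lemma exists_roots_of_isAlgClosed {F : Type*} [Field F] [IsAlgClosed F] (b c : F) :
    ∃ α β : F, α ^ 2 = b * α + c ∧ β ^ 2 = b * β + c ∧ (α - β) ^ 2 = b ^ 2 + 4 * c := by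
  have hdeg : (Polynomial.X ^ 2 - Polynomial.C b * Polynomial.X - Polynomial.C c).degree = 2 := by
    compute_degree!
  obtain ⟨α, hα⟩ := IsAlgClosed.exists_root _ (hdeg.trans_ne two_ne_zero)
  simp only [Polynomial.IsRoot, Polynomial.eval_sub, Polynomial.eval_pow, Polynomial.eval_X,
    Polynomial.eval_mul, Polynomial.eval_C] at hα
  exact ⟨α, b - α, by linear_combination hα, by linear_combination hα,
    by linear_combination 4 * hα⟩

namespace IsLucasSequence

section CommRing

variable {R : Type*} [CommRing R] {a₁ a₂ : R} {u : ℕ → R}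

lemma map {S : Type*} [CommRing S] (f : R →+* S) (hu : IsLucasSequence a₁ a₂ u) :
    IsLucasSequence (f a₁) (f a₂) fun n => f (u n) where
  zero := by rw [hu.zero, _root_.map_zero]
  one := by rw [hu.one, map_one]
  add_two n := by rw [hu.add_two, map_add, map_mul, map_mul]

lemma apply_add_add_one (hu : IsLucasSequence a₁ a₂ u) (m k : ℕ) :
    u (m + k + 1) = u (m + 1) * u (k + 1) + a₂ * u m * u k := by
  induction k generalizing m with
  | zero => simp [hu.zero, hu.one]
  | succ k ih =>
    rw [← add_assoc, add_right_comm m k 1, ih, hu.add_two m, hu.add_two k]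
    ring

lemma sub_mul_apply (hu : IsLucasSequence a₁ a₂ u) {α β : R} (hα : α ^ 2 = a₁ * α + a₂)
    (hβ : β ^ 2 = a₁ * β + a₂) : ∀ n, (α - β) * u n = α ^ n - β ^ n
  | 0 => by simp [hu.zero]
  | 1 => by simp [hu.one]
  | n + 2 => by
    rw [hu.add_two]
    linear_combination a₁ * sub_mul_apply hu hα hβ (n + 1) + a₂ * sub_mul_apply hu hα hβ n -
      α ^ n * hα + β ^ n * hβ

lemma sub_mul_apply_char_mul (hu : IsLucasSequence a₁ a₂ u) {α β : R}
    (hα : α ^ 2 = a₁ * α + a₂) (hβ : β ^ 2 = a₁ * β + a₂) (p : ℕ) [Fact p.Prime] [CharP R p]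
    (k : ℕ) : (α - β) * u (p * k) = ((α - β) * u k) ^ p := by
  rw [hu.sub_mul_apply hα hβ, hu.sub_mul_apply hα hβ, sub_pow_char, ← pow_mul, ← pow_mul,
    mul_comm k]

lemma isCoprime_apply_succ_param (hu : IsLucasSequence a₁ a₂ u) (hcop : IsCoprime a₁ a₂) (n : ℕ) :
    IsCoprime (u (n + 1)) a₂ := by
  induction n with
  | zero => simpa [hu.one] using isCoprime_one_left
  | succ n ih =>
    rw [hu.add_two]
    exact (hcop.mul_left ih).add_mul_left_left _

lemma isCoprime_apply_succ (hu : IsLucasSequence a₁ a₂ u) (hcop : IsCoprime a₁ a₂) (n : ℕ) :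
    IsCoprime (u n) (u (n + 1)) := by
  induction n with
  | zero => simpa [hu.one] using isCoprime_one_right
  | succ n ih =>
    rw [hu.add_two, add_comm (a₁ * _)]
    exact ((hu.isCoprime_apply_succ_param hcop n).mul_right ih.symm).add_mul_right_right _

lemma periodic_dvd (hu : IsLucasSequence a₁ a₂ u) (hcop : IsCoprime a₁ a₂) {d : R} {z : ℕ}
    (hd : d ∣ u z) : Function.Periodic (fun n => d ∣ u n) z := by
  intro n
  obtain _ | k := z
  · rfl
  have hda₂ : IsCoprime d a₂ := (hu.isCoprime_apply_succ_param hcop k).of_isCoprime_of_dvd_left hd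
  have hduk : IsCoprime d (u k) :=
    (hu.isCoprime_apply_succ hcop k).symm.of_isCoprime_of_dvd_left hd
  apply propext
  change d ∣ u (n + k + 1) ↔ d ∣ u n
  rw [hu.apply_add_add_one, dvd_add_right (hd.mul_left _)]
  exact ⟨fun h => hda₂.dvd_of_dvd_mul_left (hduk.dvd_of_dvd_mul_right h),
    fun h => (h.mul_left _).mul_right _⟩

lemma apply_ne_zero_of_pow_ne_one [IsDomain R] (hu : IsLucasSequence a₁ a₂ u) {α β : R}
    (hα : α ^ 2 = a₁ * α + a₂) (hβ : β ^ 2 = a₁ * β + a₂) {n : ℕ} (h : α ^ n ≠ β ^ n) :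
    u n ≠ 0 := by
  have hbinet := hu.sub_mul_apply hα hβ n
  exact right_ne_zero_of_mul (hbinet ▸ sub_ne_zero.mpr h)

end CommRing

lemma apply_eq_zero_of_apply_char_mul_eq_zero {F : Type*} [Field F] [IsAlgClosed F] {a₁ a₂ : F}
    {u : ℕ → F} (hu : IsLucasSequence a₁ a₂ u) (hΔ : a₁ ^ 2 + 4 * a₂ ≠ 0) (p : ℕ)
    [Fact p.Prime] [CharP F p] {k : ℕ} (h : u (p * k) = 0) : u k = 0 := by
  obtain ⟨α, β, hα, hβ, hsq⟩ := exists_roots_of_isAlgClosed a₁ a₂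
  have hne : α - β ≠ 0 := pow_ne_zero_iff two_ne_zero |>.mp (hsq ▸ hΔ)
  have hfrob := hu.sub_mul_apply_char_mul hα hβ p k
  rw [h, mul_zero] at hfrob
  exact (mul_eq_zero.mp (eq_zero_of_pow_eq_zero hfrob.symm)).resolve_left hne

lemma abs_apply_le {R : Type*} [CommRing R] [LinearOrder R] [IsStrictOrderedRing R] {a₁ a₂ : R}
    {u : ℕ → R} (hu : IsLucasSequence a₁ a₂ u) : ∀ n, |u n| ≤ (|a₁| + |a₂| + 1) ^ n
  | 0 => by simp [hu.zero]
  | 1 => by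
    rw [hu.one, abs_one, pow_one]
    linarith [abs_nonneg a₁, abs_nonneg a₂]
  | n + 2 => by
    set A := |a₁| + |a₂| + 1 with hA
    have hA1 : 1 ≤ A := by linarith [abs_nonneg a₁, abs_nonneg a₂]
    calc |u (n + 2)| ≤ |a₁| * |u (n + 1)| + |a₂| * |u n| := by
          rw [hu.add_two, ← abs_mul, ← abs_mul]
          exact abs_add_le _ _
      _ ≤ |a₁| * A ^ (n + 1) + |a₂| * A ^ (n + 1) := by
          gcongr
          · exact abs_apply_le hu (n + 1)
          · exact (abs_apply_le hu n).trans (pow_le_pow_right₀ hA1 n.le_succ)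
      _ = (A - 1) * A ^ (n + 1) := by rw [hA]; ring
      _ ≤ A * A ^ (n + 1) := by gcongr; linarith
      _ = A ^ (n + 2) := by ring

variable {a₁ a₂ : ℤ} {u : ℕ → ℤ}

lemma apply_ne_zero (hu : IsLucasSequence a₁ a₂ u) (ha₂ : a₂ ≠ 0) (hΔ : a₁ ^ 2 + 4 * a₂ ≠ 0)
    (hnd : ∀ α β : ℂ, α ^ 2 = a₁ * α + a₂ → β ^ 2 = a₁ * β + a₂ → α ≠ β →
      ∀ k : ℕ, 0 < k → (α / β) ^ k ≠ 1) {n : ℕ} (hn : n ≠ 0) : u n ≠ 0 := by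
  obtain ⟨α, β, hα, hβ, hsq⟩ := exists_roots_of_isAlgClosed (a₁ : ℂ) a₂
  have hne : α ≠ β := by
    rintro rfl
    exact hΔ (by exact_mod_cast hsq.symm.trans (by ring : _ = (0 : ℂ)))
  have hβ0 : β ≠ 0 := by
    rintro rfl
    exact ha₂ (by simpa using hβ.symm)
  have hpow : α ^ n ≠ β ^ n := fun h => hnd α β hα hβ hne n (Nat.pos_of_ne_zero hn) (by
    rw [div_pow, h, div_self (pow_ne_zero n hβ0)])
  simpa using (hu.map (Int.castRingHom ℂ)).apply_ne_zero_of_pow_ne_one hα hβ hpow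

lemma dvd_apply_of_dvd_apply_prime_mul (hu : IsLucasSequence a₁ a₂ u) {p : ℕ} (hp : p.Prime)
    (hΔ : ¬ (p : ℤ) ∣ a₁ ^ 2 + 4 * a₂) {k : ℕ} (h : (p : ℤ) ∣ u (p * k)) : (p : ℤ) ∣ u k := by
  have : Fact p.Prime := ⟨hp⟩
  have : CharP (AlgebraicClosure (ZMod p)) p := charP_of_injective_algebraMap
    (algebraMap (ZMod p) (AlgebraicClosure (ZMod p))).injective p
  let f := Int.castRingHom (AlgebraicClosure (ZMod p))
  have hf (z : ℤ) : f z = 0 ↔ (p : ℤ) ∣ z := CharP.intCast_eq_zero_iff _ p z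
  have hΔ' : f a₁ ^ 2 + 4 * f a₂ ≠ 0 := by
    rw [← hf, map_add, map_pow, map_mul, map_ofNat] at hΔ
    exact hΔ
  rw [← hf] at h ⊢
  exact (hu.map f).apply_eq_zero_of_apply_char_mul_eq_zero hΔ' p h

lemma dvd_apply_iff (hu : IsLucasSequence a₁ a₂ u) (hcop : IsCoprime a₁ a₂) {d n : ℕ} :
    (d : ℤ) ∣ u n ↔ zu u d ∣ n := by
  rcases Set.eq_empty_or_nonempty {n : ℕ | 0 < n ∧ (d : ℤ) ∣ u n} with hempty | hnonempty
  · have hzu : zu u d = 0 := by rw [zu, hempty, Nat.sInf_empty]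
    have hn : (d : ℤ) ∣ u n → n = 0 := fun h => by
      by_contra h0
      exact hempty.le ⟨Nat.pos_of_ne_zero h0, h⟩
    rw [hzu, zero_dvd_iff]
    exact ⟨hn, fun h => by rw [h, hu.zero]; exact dvd_zero _⟩
  · obtain ⟨hpos, hdvd⟩ : 0 < zu u d ∧ (d : ℤ) ∣ u (zu u d) := Nat.sInf_mem hnonempty
    rw [← (hu.periodic_dvd hcop hdvd).map_mod_nat n, Nat.dvd_iff_mod_eq_zero]
    refine ⟨fun h => ?_, fun h => by rw [h, hu.zero]; exact dvd_zero _⟩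
    by_contra h0
    exact Nat.notMem_of_lt_sInf (Nat.mod_lt n hpos) ⟨Nat.pos_of_ne_zero h0, h⟩

lemma dvd_gu_iff (hu : IsLucasSequence a₁ a₂ u) (hcop : IsCoprime a₁ a₂) {d n : ℕ} :
    d ∣ gu u n ↔ ellu u d ∣ n := by
  rw [gu, ellu, Nat.lcm_dvd_iff, ← hu.dvd_apply_iff hcop, Int.dvd_gcd_iff, Int.natCast_dvd_natCast]

end IsLucasSequence

lemma two_pow_card_primeFactors_le {n : ℕ} (hn : n ≠ 0) : 2 ^ #n.primeFactors ≤ n := by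
  calc 2 ^ #n.primeFactors ≤ ∏ p ∈ n.primeFactors, p :=
        pow_card_le_prod _ _ _ fun p hp => (Nat.prime_of_mem_primeFactors hp).two_le
    _ ≤ n := Nat.le_of_dvd (Nat.pos_of_ne_zero hn) (Nat.prod_primeFactors_dvd n)

/-- The rank of appearance of the prime `p`, reset to `1` at the primes dividing `Δ`. These are the
primes which may divide their rank, so that `p` never divides `reducedRank Δ u p ≠ 0`. -/
noncomputable def reducedRank (Δ : ℤ) (u : ℕ → ℤ) (p : ℕ) : ℕ :=
  if (p : ℤ) ∣ Δ then 1 else zu u p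

namespace IsLucasSequence

variable {a₁ a₂ : ℤ} {u : ℕ → ℤ}

lemma zu_dvd_zu (hu : IsLucasSequence a₁ a₂ u) (hcop : IsCoprime a₁ a₂) {c d : ℕ} (h : c ∣ d) :
    zu u c ∣ zu u d := by
  rw [← hu.dvd_apply_iff hcop]
  exact (Int.natCast_dvd_natCast.mpr h).trans ((hu.dvd_apply_iff hcop).mpr dvd_rfl)

lemma reducedRank_dvd_zu (hu : IsLucasSequence a₁ a₂ u) (hcop : IsCoprime a₁ a₂) (Δ : ℤ)
    {p d : ℕ} (h : p ∣ d) : reducedRank Δ u p ∣ zu u d := by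
  rw [reducedRank]
  split_ifs
  · exact one_dvd _
  · exact hu.zu_dvd_zu hcop h

lemma coprime_reducedRank (hu : IsLucasSequence a₁ a₂ u) (hcop : IsCoprime a₁ a₂) {p : ℕ}
    (hp : p.Prime) (h0 : reducedRank (a₁ ^ 2 + 4 * a₂) u p ≠ 0) :
    p.Coprime (reducedRank (a₁ ^ 2 + 4 * a₂) u p) := by
  rw [reducedRank] at h0 ⊢
  split_ifs at h0 ⊢ with hΔ
  · exact Nat.coprime_one_right p
  rw [hp.coprime_iff_not_dvd]
  rintro ⟨k, hk⟩
  have hk0 : 0 < k := Nat.pos_of_ne_zero (by rintro rfl; exact h0 hk)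
  have hdvd : (p : ℤ) ∣ u (p * k) := (hu.dvd_apply_iff hcop).mpr hk.dvd
  have hle : p * k ≤ k := hk ▸ Nat.le_of_dvd hk0
    ((hu.dvd_apply_iff hcop).mp (hu.dvd_apply_of_dvd_apply_prime_mul hp hΔ hdvd))
  exact hle.not_gt (lt_mul_of_one_lt_left hk0 hp.one_lt)

lemma prime_dvd_of_reducedRank_eq (hu : IsLucasSequence a₁ a₂ u) (hcop : IsCoprime a₁ a₂)
    {Δ : ℤ} {p n : ℕ} (h : reducedRank Δ u p = n) : (p : ℤ) ∣ u n * Δ := by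
  rw [reducedRank] at h
  split_ifs at h with hΔ
  · exact hΔ.mul_left _
  · exact ((hu.dvd_apply_iff hcop).mpr h.dvd).mul_right _

lemma exists_encard_reducedRank_fiber_le (hu : IsLucasSequence a₁ a₂ u) (hcop : IsCoprime a₁ a₂)
    (hne : ∀ n ≠ 0, u n ≠ 0) {Δ : ℤ} (hΔ : Δ ≠ 0) :
    ∃ B : ℕ, ∀ n ≠ 0,
      ((fun p : Nat.Primes => reducedRank Δ u p) ⁻¹' {n}).encard ≤ (B * n : ℕ) := by
  set A : ℕ := a₁.natAbs + a₂.natAbs + 1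
  refine ⟨A * Δ.natAbs, fun n hn => ?_⟩
  set N : ℕ := (u n * Δ).natAbs
  have hN0 : N ≠ 0 := Int.natAbs_ne_zero.mpr (mul_ne_zero (hne n hn) hΔ)
  have hgrowth : (u n).natAbs ≤ A ^ n := by
    simpa [A, ← Int.ofNat_le] using hu.abs_apply_le n
  have hlog : #N.primeFactors ≤ A * Δ.natAbs * n := by
    refine (Nat.pow_le_pow_iff_right one_lt_two).mp ?_
    calc 2 ^ #N.primeFactors ≤ N := two_pow_card_primeFactors_le hN0
      _ = (u n).natAbs * Δ.natAbs := Int.natAbs_mul _ _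
      _ ≤ A ^ n * Δ.natAbs ^ n :=
          Nat.mul_le_mul hgrowth (Nat.le_self_pow hn _)
      _ = (A * Δ.natAbs) ^ n := (mul_pow _ _ _).symm
      _ ≤ (2 ^ (A * Δ.natAbs)) ^ n := Nat.pow_le_pow_left Nat.lt_two_pow_self.le n
      _ = 2 ^ (A * Δ.natAbs * n) := (pow_mul _ _ _).symm
  calc ((fun p : Nat.Primes => reducedRank Δ u p) ⁻¹' {n}).encard
      = ((↑) '' ((fun p : Nat.Primes => reducedRank Δ u p) ⁻¹' {n}) : Set ℕ).encard :=
        (Nat.Primes.coe_nat_injective.encard_image _).symm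
    _ ≤ (N.primeFactors : Set ℕ).encard := by
        refine Set.encard_le_encard ?_
        rintro _ ⟨p, hp, rfl⟩
        exact Nat.mem_primeFactors.mpr
          ⟨p.2, Int.natCast_dvd.mp (hu.prime_dvd_of_reducedRank_eq hcop hp), hN0⟩
    _ = #N.primeFactors := Set.encard_coe_eq_coe_finsetCard _
    _ ≤ (A * Δ.natAbs * n : ℕ) := by exact_mod_cast hlog

end IsLucasSequence

end Lucas

section Summability

lemma summable_of_forall_exists_le {ι κ : Type*} {F : ι → ℝ} {f : κ → ℝ} (D : ι → κ)
    (hF : Summable F) (hf : ∀ k, 0 ≤ f k) (h : ∀ k, f k ≠ 0 → ∃ i, D i = k ∧ f k ≤ F i) :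
    Summable f := by
  choose i hi hle using fun k : Function.support f => h k k.2
  have hinj : Function.Injective i := fun k l hkl => Subtype.ext (by rw [← hi k, ← hi l, hkl])
  rw [← Set.indicator_support (f := f), ← summable_subtype_iff_indicator]
  exact (hF.comp_injective hinj).of_nonneg_of_le (fun k => hf k) hle

lemma summable_rpow_of_encard_fiber_le {ι : Type*} {w : ι → ℕ} {B : ℕ}
    (hw : ∀ n ≠ 0, (w ⁻¹' {n}).encard ≤ (B * n : ℕ)) {c : ℝ} (hc : c < -2) :
    Summable fun i => (w i : ℝ) ^ c := by
  have hconst (n : ℕ) (i : {i // w i = n}) : (w i : ℝ) ^ c = (n : ℝ) ^ c := by rw [i.2]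
  have hzero : ((0 : ℕ) : ℝ) ^ c = 0 := by rw [Nat.cast_zero, zero_rpow (by linarith)]
  have hfin (n : ℕ) (hn : n ≠ 0) : Finite {i // w i = n} ∧ Nat.card {i // w i = n} ≤ B * n :=
    Set.encard_le_coe_iff_finite_ncard_le.mp (hw n hn)
  rw [← (Equiv.sigmaFiberEquiv w).summable_iff, summable_sigma_of_nonneg fun _ => by
    simp only [Function.comp_apply]; positivity]
  simp only [Function.comp_apply, Equiv.sigmaFiberEquiv_apply, hconst]
  refine ⟨fun n => ?_, ?_⟩
  · rcases eq_or_ne n 0 with rfl | hn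
    · simp only [hzero, summable_zero]
    · have := (hfin n hn).1
      exact .of_finite
  · refine ((summable_nat_rpow (p := c + 1).mpr (by linarith)).mul_left (B : ℝ)).of_nonneg_of_le
      (fun n => tsum_nonneg fun _ => by positivity) fun n => ?_
    rcases eq_or_ne n 0 with rfl | hn
    · simp only [hzero, tsum_zero]
      positivity
    · have hcard : (Nat.card {i // w i = n} : ℝ) ≤ B * n := by exact_mod_cast (hfin n hn).2
      calc ∑' _ : {i // w i = n}, (n : ℝ) ^ c = Nat.card {i // w i = n} * (n : ℝ) ^ c := by
            rw [tsum_const, nsmul_eq_mul]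
        _ ≤ B * n * (n : ℝ) ^ c := by gcongr
        _ = B * (n : ℝ) ^ (c + 1) := by rw [rpow_add_one (by positivity)]; ring

lemma rpow_mul_rpow_le_add {x w a b : ℝ} (hx : 0 < x) (hw : 0 ≤ w) (ha : a ≤ 0) (hb : b < 0) :
    x ^ a * w ^ b ≤ x ^ ((2 * a + b) / 2) + w ^ (2 * a + b) := by
  have hxe : 0 ≤ x ^ ((2 * a + b) / 2) := by positivity
  have hwe : 0 ≤ w ^ (2 * a + b) := by positivity
  rcases hw.eq_or_lt with rfl | hw
  · rw [zero_rpow hb.ne]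
    linarith
  rcases le_total x (w ^ 2) with h | h
  · calc x ^ a * w ^ b = x ^ a * (w ^ 2) ^ (b / 2) := by
          rw [← rpow_natCast_mul hw.le, Nat.cast_two, mul_div_cancel₀ _ two_ne_zero]
      _ ≤ x ^ a * x ^ (b / 2) := by
          gcongr ?_ * ?_
          exact rpow_le_rpow_of_nonpos hx h (by linarith)
      _ = x ^ ((2 * a + b) / 2) := by rw [← rpow_add hx]; ring_nf
      _ ≤ _ := by linarith
  · calc x ^ a * w ^ b ≤ (w ^ 2) ^ a * w ^ b := by
          gcongr ?_ * ?_
          exact rpow_le_rpow_of_nonpos (by positivity) h ha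
      _ = w ^ (2 * a + b) := by rw [← rpow_natCast_mul hw.le, Nat.cast_two, ← rpow_add hw]
      _ ≤ _ := by linarith

lemma summable_primes_rpow_mul_rpow {w : Nat.Primes → ℕ} {B : ℕ}
    (hw : ∀ n ≠ 0, (w ⁻¹' {n}).encard ≤ (B * n : ℕ)) {a b : ℝ} (ha : a ≤ 0) (hb : b < 0)
    (hab : 2 * a + b < -2) : Summable fun p : Nat.Primes => (p : ℝ) ^ a * (w p : ℝ) ^ b :=
  ((Nat.Primes.summable_rpow (r := (2 * a + b) / 2).mpr (by linarith)).add
    (summable_rpow_of_encard_fiber_le hw hab)).of_nonneg_of_le (fun _ => by positivity)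
      fun p => rpow_mul_rpow_le_add (by exact_mod_cast p.2.pos) (Nat.cast_nonneg _) ha hb

lemma summable_sigma_divisors {ι : Type*} {w : ι → ℕ} {F : ι → ℝ} (hF : ∀ i, 0 ≤ F i) {η : ℝ}
    (hη : 0 < η) (h : Summable fun i => F i * (w i : ℝ) ^ η) :
    Summable fun x : Σ i, (w i).divisors => F x.1 := by
  obtain ⟨C, hC, hdiv⟩ := exists_card_divisors_le_mul_rpow hη
  rw [summable_sigma_of_nonneg fun x => hF x.1]
  refine ⟨fun i => .of_finite, (h.mul_left C).of_nonneg_of_le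
    (fun i => tsum_nonneg fun _ => hF i) fun i => ?_⟩
  have hcard : (#(w i).divisors : ℝ) ≤ C * (w i : ℝ) ^ η := by
    rcases eq_or_ne (w i) 0 with h0 | h0
    · rw [h0, Nat.divisors_zero, card_empty, Nat.cast_zero]
      positivity
    · exact hdiv _ h0
  calc ∑' _ : (w i).divisors, F i = #(w i).divisors * F i := by
        rw [tsum_const, nsmul_eq_mul, Nat.card_eq_fintype_card, Fintype.card_coe]
    _ ≤ C * (w i : ℝ) ^ η * F i := mul_le_mul_of_nonneg_right hcard (hF i)
    _ = C * (F i * (w i : ℝ) ^ η) := by ring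

lemma exists_prime_le_ordProj_pow {d : ℕ} (hd0 : d ≠ 0) (hd1 : d ≠ 1) :
    ∃ p, p.Prime ∧ p ∣ d ∧ d ≤ (ordProj[p] d) ^ #d.primeFactors := by
  obtain ⟨p, hp, hmax⟩ := exists_max_image d.primeFactors (fun p => ordProj[p] d)
    (Nat.nonempty_primeFactors.mpr (by omega))
  refine ⟨p, Nat.prime_of_mem_primeFactors hp, Nat.dvd_of_mem_primeFactors hp, ?_⟩
  calc d = ∏ r ∈ d.primeFactors, ordProj[r] d := (Nat.prod_factorization_pow_eq_self hd0).symm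
    _ ≤ (ordProj[p] d) ^ #d.primeFactors := prod_le_pow_card _ _ _ hmax

lemma exists_eq_mul_and_mul_mul_le {q c w l : ℕ} (hqw : q.Coprime w) (hc : c ≠ 0) (hl : l ≠ 0)
    (hqc : q * c ∣ l) (hw : w ∣ l) : ∃ g m, g ∣ w ∧ c = g * m ∧ q * m * w ≤ l := by
  obtain ⟨m, hm⟩ := Nat.gcd_dvd_left c w
  refine ⟨c.gcd w, m, Nat.gcd_dvd_right c w, hm, ?_⟩
  have hlcm : q * m * w = (q * c).lcm w := by
    refine Nat.eq_of_mul_eq_mul_left (Nat.gcd_pos_of_pos_left w (Nat.pos_of_ne_zero hc)) ?_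
    rw [← hqw.gcd_mul_left_cancel c, Nat.gcd_mul_lcm, hqw.gcd_mul_left_cancel]
    nth_rw 2 [hm]
    ring
  rw [hlcm]
  exact Nat.le_of_dvd (Nat.pos_of_ne_zero hl) (Nat.lcm_dvd hqc hw)

lemma natCast_pow_succ_rpow_le {p : ℕ} (hp : 2 ≤ p) {a : ℝ} (ha : a ≤ 0) (h : ℕ) :
    ((p : ℝ) ^ (h + 1)) ^ a ≤ (p : ℝ) ^ a * (2 ^ a) ^ h := by
  rw [← rpow_pow_comm (Nat.cast_nonneg p), pow_succ']
  gcongr _ * ?_ ^ _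
  exact rpow_le_rpow_of_nonpos two_pos (by exact_mod_cast hp) ha

lemma mul_mul_rpow_sub_one_le {q m w s η : ℝ} {k : ℕ} (hq : 0 < q) (hm : 0 < m) (hw : 0 < w)
    (hqm : q * m ≤ q ^ k) (hs : 0 ≤ s + η) :
    (q * m * w) ^ (s - 1) ≤ q ^ (k * (s + η) - 1 - η) * m ^ (-1 - η) * w ^ (s - 1) := by
  calc (q * m * w) ^ (s - 1)
      = (q * m) ^ (s + η) * (q * m) ^ (-1 - η) * w ^ (s - 1) := by
        rw [mul_rpow (by positivity) hw.le, ← rpow_add (by positivity)]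
        ring_nf
    _ ≤ (q ^ k) ^ (s + η) * (q * m) ^ (-1 - η) * w ^ (s - 1) := by gcongr
    _ = q ^ (k * (s + η) - 1 - η) * m ^ (-1 - η) * w ^ (s - 1) := by
        rw [← rpow_natCast_mul hq.le, mul_rpow hq.le hm.le, ← mul_assoc, ← rpow_add hq]
        ring_nf

lemma exists_rpow_mul_rho_div_totient_le_rpow (lam : ℕ) {σ η : ℝ} (hσ : 0 ≤ σ) (hη : 0 < η)
    (hη1 : η ≤ 1) : ∃ C : ℝ, 0 < C ∧ ∀ d l N : ℕ, d ≠ 0 → d ≤ N → N ≤ l →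
      (d : ℝ) ^ σ * (rho lam d / l.totient) ≤ C * (N : ℝ) ^ (σ + 2 * η - 1) := by
  obtain ⟨C₁, hC₁, hlog⟩ := exists_log_pow_le_mul_rpow lam hη
  obtain ⟨C₂, hC₂, htot⟩ := exists_inv_totient_le_mul_rpow hη
  refine ⟨C₁ * C₂, by positivity, fun d l N hd hdN hNl => ?_⟩
  have hd' : (0 : ℝ) < d := by positivity
  have hN' : (0 : ℝ) < N := hd'.trans_le (by exact_mod_cast hdN)
  have hrho : rho lam d ≤ C₁ * (d : ℝ) ^ η :=
    (rho_le_log_pow lam hd).trans (hlog d (by exact_mod_cast Nat.one_le_iff_ne_zero.mpr hd))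
  have htot : (l.totient : ℝ)⁻¹ ≤ C₂ * (N : ℝ) ^ (η - 1) := by
    refine (htot l (by omega)).trans (mul_le_mul_of_nonneg_left ?_ hC₂.le)
    exact rpow_le_rpow_of_nonpos hN' (by exact_mod_cast hNl) (by linarith)
  calc (d : ℝ) ^ σ * (rho lam d / l.totient)
      ≤ (d : ℝ) ^ σ * (C₁ * (d : ℝ) ^ η * (C₂ * (N : ℝ) ^ (η - 1))) := by
        rw [div_eq_mul_inv]
        gcongr
    _ ≤ (N : ℝ) ^ σ * (C₁ * (N : ℝ) ^ η * (C₂ * (N : ℝ) ^ (η - 1))) := by gcongr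
    _ = C₁ * C₂ * (N : ℝ) ^ (σ + 2 * η - 1) := by
        rw [show σ + 2 * η - 1 = σ + η + (η - 1) by ring, rpow_add hN', rpow_add hN']
        ring

variable {w : Nat.Primes → ℕ} {ℓ : ℕ → ℕ}

/-- Majorant of the terms `d ^ σ ρ(d) / φ(ℓ d)`, indexed by decompositions
`d = p ^ (h + 1) * g * m` with `g ∣ w p`, encoded as `((p, g), h, m)`. -/
noncomputable def rankMajorant (w : Nat.Primes → ℕ) (a b η : ℝ)
    (x : (Σ p : Nat.Primes, (w p).divisors) × ℕ × ℕ) : ℝ :=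
  (x.1.1 : ℝ) ^ a * (w x.1.1 : ℝ) ^ b * ((2 ^ a) ^ x.2.1 * (x.2.2 : ℝ) ^ (-1 - η))

lemma summable_rankMajorant {B : ℕ} (hw : ∀ n ≠ 0, (w ⁻¹' {n}).encard ≤ (B * n : ℕ))
    {a b η : ℝ} (ha : a < 0) (hη : 0 < η) (hb : b + η < 0) (hab : 2 * a + b + η < -2) :
    Summable (rankMajorant w a b η) := by
  have hprimes : Summable fun p : Nat.Primes =>
      (p : ℝ) ^ a * (w p : ℝ) ^ b * (w p : ℝ) ^ η := by
    refine (summable_primes_rpow_mul_rpow hw ha.le hb (by linarith)).congr fun p => ?_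
    rw [mul_assoc, rpow_add' (Nat.cast_nonneg _) hb.ne]
  have hpow := summable_sigma_divisors (fun _ => by positivity) hη hprimes
  have hgeom : Summable fun h : ℕ => ((2 : ℝ) ^ a) ^ h :=
    summable_geometric_of_lt_one (by positivity) (rpow_lt_one_of_one_lt_of_neg one_lt_two ha)
  have hm : Summable fun m : ℕ => (m : ℝ) ^ (-1 - η) := summable_nat_rpow.mpr (by linarith)
  exact hpow.mul_of_nonneg (hgeom.mul_of_nonneg hm (fun _ => by positivity) fun _ => by positivity)
    (fun _ => by positivity) fun _ => by positivity

lemma exists_prime_pow_mul_mul_eq (hcop : ∀ p, w p ≠ 0 → (p : ℕ).Coprime (w p))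
    (hdvd : ∀ d, d ∣ ℓ d) (hrank : ∀ (p : Nat.Primes) d, (p : ℕ) ∣ d → w p ∣ ℓ d) {d : ℕ}
    (hd1 : d ≠ 1) (hℓ : ℓ d ≠ 0) :
    ∃ (p : Nat.Primes) (h g m : ℕ), d = p ^ (h + 1) * (g * m) ∧ w p ≠ 0 ∧ g ∣ w p ∧
      p ^ (h + 1) * m * w p ≤ ℓ d ∧ p ^ (h + 1) * m ≤ (p ^ (h + 1)) ^ #d.primeFactors := by
  have hd0 : d ≠ 0 := ne_zero_of_dvd_ne_zero hℓ (hdvd d)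
  obtain ⟨p, hp, hpd, hle⟩ := exists_prime_le_ordProj_pow hd0 hd1
  obtain ⟨h, hh⟩ := Nat.exists_eq_succ_of_ne_zero (hp.factorization_pos_of_dvd hd0 hpd).ne'
  have hwℓ : w ⟨p, hp⟩ ∣ ℓ d := hrank ⟨p, hp⟩ d hpd
  have hw : w ⟨p, hp⟩ ≠ 0 := ne_zero_of_dvd_ne_zero hℓ hwℓ
  have hmul : p ^ (h + 1) * ordCompl[p] d = d := hh ▸ Nat.ordProj_mul_ordCompl_eq_self d p
  obtain ⟨g, m, hg, hgm, hmℓ⟩ := exists_eq_mul_and_mul_mul_le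
    ((hcop ⟨p, hp⟩ hw).pow_left (h + 1)) (Nat.ordCompl_pos p hd0).ne' hℓ
    (hmul.dvd.trans (hdvd d)) hwℓ
  have hd : d = p ^ (h + 1) * (g * m) := by rw [← hgm, hmul]
  refine ⟨⟨p, hp⟩, h, g, m, hd, hw, hg, hmℓ, ?_⟩
  calc p ^ (h + 1) * m ≤ p ^ (h + 1) * (g * m) := by
        gcongr
        exact Nat.le_mul_of_pos_left m (Nat.pos_of_dvd_of_pos hg (Nat.pos_of_ne_zero hw))
    _ = d := hd.symm
    _ ≤ (p ^ (h + 1)) ^ #d.primeFactors := by simpa only [hh] using hle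

lemma rpow_le_rankMajorant {p : Nat.Primes} {h g m k : ℕ} (hg : g ∈ (w p).divisors) (hm : m ≠ 0)
    (hle : p ^ (h + 1) * m ≤ (p ^ (h + 1)) ^ k) {s η : ℝ} (hs : 0 ≤ s + η)
    (ha : k * (s + η) - 1 - η ≤ 0) :
    ((p ^ (h + 1) * m * w p : ℕ) : ℝ) ^ (s - 1) ≤
      rankMajorant w (k * (s + η) - 1 - η) (s - 1) η (⟨p, g, hg⟩, h, m) := by
  have hw : (0 : ℝ) < w p := by exact_mod_cast Nat.pos_of_ne_zero (Nat.mem_divisors.mp hg).2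
  have hp : (0 : ℝ) < p := by exact_mod_cast p.2.pos
  have hm' : (0 : ℝ) < m := by positivity
  calc ((p ^ (h + 1) * m * w p : ℕ) : ℝ) ^ (s - 1)
      = ((p : ℝ) ^ (h + 1) * m * w p) ^ (s - 1) := by push_cast; rfl
    _ ≤ ((p : ℝ) ^ (h + 1)) ^ (k * (s + η) - 1 - η) * (m : ℝ) ^ (-1 - η) * (w p : ℝ) ^ (s - 1) :=
        mul_mul_rpow_sub_one_le (by positivity) hm' hw (by exact_mod_cast hle) hs
    _ ≤ (p : ℝ) ^ (k * (s + η) - 1 - η) * (2 ^ (k * (s + η) - 1 - η)) ^ h *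
          (m : ℝ) ^ (-1 - η) * (w p : ℝ) ^ (s - 1) := by
        gcongr
        exact natCast_pow_succ_rpow_le p.2.two_le ha h
    _ = _ := by rw [rankMajorant]; ring

lemma exists_rpow_mul_rho_div_totient_le_rankMajorant
    (hcop : ∀ p, w p ≠ 0 → (p : ℕ).Coprime (w p)) (hdvd : ∀ d, d ∣ ℓ d)
    (hrank : ∀ (p : Nat.Primes) d, (p : ℕ) ∣ d → w p ∣ ℓ d) {lam : ℕ} (hlam : lam ≠ 0) {σ η : ℝ}
    (hσ : 0 ≤ σ) (hη : 0 < η) (hη1 : η ≤ 1) (ha : lam * (σ + 2 * η + η) - 1 - η ≤ 0) :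
    ∃ C : ℝ, 0 < C ∧ ∀ d : ℕ, (d : ℝ) ^ σ * (rho lam d / (ℓ d).totient) ≠ 0 →
      ∃ x : (Σ p : Nat.Primes, (w p).divisors) × ℕ × ℕ,
        (x.1.1 : ℕ) ^ (x.2.1 + 1) * (x.1.2 * x.2.2) = d ∧
        (d : ℝ) ^ σ * (rho lam d / (ℓ d).totient) ≤
          C * rankMajorant w (lam * (σ + 2 * η + η) - 1 - η) (σ + 2 * η - 1) η x := by
  obtain ⟨C, hC, hbound⟩ := exists_rpow_mul_rho_div_totient_le_rpow lam hσ hη hη1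
  refine ⟨C, hC, fun d hd => ?_⟩
  obtain ⟨hrho, htot⟩ := div_ne_zero_iff.mp (right_ne_zero_of_mul hd)
  have hℓ : ℓ d ≠ 0 := fun h => htot (by rw [h, Nat.totient_zero, Nat.cast_zero])
  have hd0 : d ≠ 0 := ne_zero_of_dvd_ne_zero hℓ (hdvd d)
  have hd1 : d ≠ 1 := fun h => hrho (by rw [h, rho_one hlam])
  obtain ⟨p, h, g, m, rfl, hw, hg, hleℓ, hlepow⟩ :=
    exists_prime_pow_mul_mul_eq hcop hdvd hrank hd1 hℓ
  have hgw : g ≤ w p := Nat.le_of_dvd (Nat.pos_of_ne_zero hw) hg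
  have hm : m ≠ 0 := right_ne_zero_of_mul (right_ne_zero_of_mul hd0)
  have hlepow' : (p : ℕ) ^ (h + 1) * m ≤ (p ^ (h + 1)) ^ lam := hlepow.trans <|
    Nat.pow_le_pow_right (pow_pos p.2.pos _) (card_primeFactors_le_of_rho_ne_zero hrho)
  refine ⟨(⟨p, g, Nat.mem_divisors.mpr ⟨hg, hw⟩⟩, h, m), rfl,
    (hbound _ _ _ hd0 ?_ hleℓ).trans ?_⟩
  · calc (p : ℕ) ^ (h + 1) * (g * m) ≤ p ^ (h + 1) * (w p * m) := by gcongr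
      _ = p ^ (h + 1) * m * w p := by ring
  · exact mul_le_mul_of_nonneg_left
      (rpow_le_rankMajorant _ hm hlepow' (by linarith) ha) hC.le

theorem summable_rpow_mul_rho_div_totient {B : ℕ}
    (hfiber : ∀ n ≠ 0, (w ⁻¹' {n}).encard ≤ (B * n : ℕ))
    (hcop : ∀ p, w p ≠ 0 → (p : ℕ).Coprime (w p)) (hdvd : ∀ d, d ∣ ℓ d)
    (hrank : ∀ (p : Nat.Primes) d, (p : ℕ) ∣ d → w p ∣ ℓ d) {lam : ℕ} (hlam : lam ≠ 0) {σ : ℝ}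
    (hσ0 : 0 ≤ σ) (hσ : σ < 1 / (2 * lam + 1)) :
    Summable fun d : ℕ => (d : ℝ) ^ σ * (rho lam d / (ℓ d).totient) := by
  have hlam1 : (1 : ℝ) ≤ lam := by exact_mod_cast Nat.one_le_iff_ne_zero.mpr hlam
  set η : ℝ := (1 / (2 * lam + 1) - σ) / 3 with hηdef
  have hη : 0 < η := by linarith
  have hση : (2 * lam + 1) * (σ + 3 * η) = 1 := by
    rw [hηdef]
    field_simp
    ring
  have hthird : σ + 3 * η ≤ 1 / 3 := by nlinarith
  have ha : lam * (σ + 2 * η + η) - 1 - η < 0 := by linarith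
  obtain ⟨C, -, hmajorant⟩ := exists_rpow_mul_rho_div_totient_le_rankMajorant hcop hdvd hrank hlam
    hσ0 hη (by linarith) ha.le
  refine summable_of_forall_exists_le _ ((summable_rankMajorant hfiber ha hη ?_ ?_).mul_left C)
    (fun d => mul_nonneg (by positivity) (div_nonneg (rho_nonneg _ _) (Nat.cast_nonneg _)))
    hmajorant
  · linarith
  · linarith

end Summability

section Primes

lemma primesUpTo_subset_Ioc (x : ℝ) : primesUpTo x ⊆ Ioc 0 ⌊x⌋₊ := fun p hp => by
  obtain ⟨hpx, hp⟩ := mem_filter.mp hp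
  exact mem_Ioc.mpr ⟨hp.pos, Nat.lt_succ_iff.mp (mem_range.mp hpx)⟩

lemma prime_of_mem_primesUpTo {x : ℝ} {p : ℕ} (hp : p ∈ primesUpTo x) : p.Prime :=
  (mem_filter.mp hp).2

lemma primePi_le {x : ℝ} (hx : 0 ≤ x) : (primePi x : ℝ) ≤ x := by
  calc (primePi x : ℝ) ≤ ⌊x⌋₊ := by
        exact_mod_cast (card_le_card (primesUpTo_subset_Ioc x)).trans_eq (Nat.card_Ioc 0 _)
    _ ≤ x := Nat.floor_le hx

lemma mod_eq_one_mod_iff_dvd_sub_one {p b : ℕ} (hp : 1 ≤ p) : p % b = 1 % b ↔ b ∣ p - 1 :=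
  eq_comm.trans (Nat.modEq_iff_dvd' hp)

lemma primePiMod_one_eq_card (x : ℝ) (b : ℕ) :
    primePiMod x b 1 = #{p ∈ primesUpTo x | b ∣ p - 1} := by
  rw [primePiMod]
  congr 1
  exact filter_congr fun p hp => mod_eq_one_mod_iff_dvd_sub_one (prime_of_mem_primesUpTo hp).pos

lemma primePiMod_one_le {x : ℝ} (hx : 0 ≤ x) (b : ℕ) : (primePiMod x b 1 : ℝ) ≤ x / b := by
  have hinj : Set.InjOn (fun p => p - 1) (primesUpTo x : Set ℕ) := fun p hp q hq hpq =>
    (tsub_left_inj (prime_of_mem_primesUpTo hp).pos (prime_of_mem_primesUpTo hq).pos).mp hpq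
  have hmaps : ∀ p ∈ {p ∈ primesUpTo x | b ∣ p - 1}, p - 1 ∈ {n ∈ Ioc 0 ⌊x⌋₊ | b ∣ n} := by
    intro p hp
    obtain ⟨hpx, hpb⟩ := mem_filter.mp hp
    have hle := (mem_Ioc.mp (primesUpTo_subset_Ioc x hpx)).2
    have htwo := (prime_of_mem_primesUpTo hpx).two_le
    exact mem_filter.mpr ⟨mem_Ioc.mpr (by omega), hpb⟩
  have hcard : primePiMod x b 1 ≤ ⌊x⌋₊ / b := by
    rw [primePiMod_one_eq_card, ← Nat.Ioc_filter_dvd_card_eq_div]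
    exact card_le_card_of_injOn _ hmaps (hinj.mono (coe_subset.mpr (filter_subset _ _)))
  calc (primePiMod x b 1 : ℝ) ≤ (⌊x⌋₊ / b : ℕ) := by exact_mod_cast hcard
    _ ≤ ⌊x⌋₊ / b := Nat.cast_div_le
    _ ≤ x / b := by gcongr; exact Nat.floor_le hx

lemma abs_chebErr_one_le {x : ℝ} (hx : 0 ≤ x) (b : ℕ) : |chebErr x b 1| ≤ x / b.totient := by
  have hle : x / b ≤ x / b.totient := by
    rcases Nat.eq_zero_or_pos b with rfl | hb
    · simp
    · have := Nat.totient_pos.mpr hb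
      gcongr
      exact_mod_cast Nat.totient_le b
  refine abs_sub_le_of_nonneg_of_le (Nat.cast_nonneg _) ((primePiMod_one_le hx b).trans hle)
    (by positivity) ?_
  gcongr
  exact primePi_le hx

lemma abs_rho_mul_chebErr_le {x K : ℝ} (hx : 2 ≤ x)
    (hK : ∀ b : ℕ, 1 ≤ b → |chebErr x b 1| ≤ K * x ^ ((1 : ℝ) / 2) * log x) (lam : ℕ) {d : ℕ}
    (hd : d ≠ 0) (hdx : d ≤ x) (b : ℕ) :
    |rho lam d * chebErr x b 1| ≤ |K| * x ^ ((1 : ℝ) / 2) * log x ^ (lam + 1) := by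
  have hlog : 0 ≤ log x := log_nonneg (by linarith)
  have hrho : rho lam d ≤ log x ^ lam := by
    refine (rho_le_log_pow lam hd).trans (pow_le_pow_left₀ (log_natCast_nonneg d) ?_ lam)
    exact log_le_log (by positivity) hdx
  have hcheb : |chebErr x b 1| ≤ |K| * x ^ ((1 : ℝ) / 2) * log x := by
    rcases Nat.eq_zero_or_pos b with rfl | hb
    · refine (abs_chebErr_one_le (by linarith) 0).trans ?_
      rw [Nat.totient_zero, Nat.cast_zero, div_zero]
      positivity
    · refine (hK b hb).trans ?_
      gcongr
      exact le_abs_self K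
  calc |rho lam d * chebErr x b 1| = rho lam d * |chebErr x b 1| := by
        rw [abs_mul, abs_of_nonneg (rho_nonneg lam d)]
    _ ≤ log x ^ lam * (|K| * x ^ ((1 : ℝ) / 2) * log x) := by gcongr
    _ = |K| * x ^ ((1 : ℝ) / 2) * log x ^ (lam + 1) := by ring

end Primes

section Moments

variable {a₁ a₂ : ℤ} {u : ℕ → ℤ}

namespace IsLucasSequence

lemma hasSum_log_gu_pow (hu : IsLucasSequence a₁ a₂ u) (hcop : IsCoprime a₁ a₂) (lam : ℕ) {n : ℕ}
    (hn : n ≠ 0) :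
    HasSum (fun d => if ellu u d ∣ n then rho lam d else 0) (log (gu u n) ^ lam) := by
  have hgu : gu u n ≠ 0 := fun h => hn (by exact_mod_cast (Int.gcd_eq_zero_iff.mp h).1)
  rw [← sum_divisors_rho lam hgu]
  have hdiv : ∀ d ∈ (gu u n).divisors, rho lam d = if ellu u d ∣ n then rho lam d else 0 :=
    fun d hd => (if_pos ((hu.dvd_gu_iff hcop).mp (Nat.dvd_of_mem_divisors hd))).symm
  rw [sum_congr rfl hdiv]
  refine hasSum_sum_of_ne_finset_zero fun d hd => if_neg fun h => hd ?_
  exact Nat.mem_divisors.mpr ⟨(hu.dvd_gu_iff hcop).mpr h, hgu⟩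

lemma hasSum_rho_mul_primePiMod (hu : IsLucasSequence a₁ a₂ u) (hcop : IsCoprime a₁ a₂) (lam : ℕ)
    (x : ℝ) :
    HasSum (fun d => rho lam d * primePiMod x (ellu u d) 1)
      (∑ p ∈ primesUpTo x, log (gu u (p - 1)) ^ lam) := by
  refine (hasSum_sum fun p hp => hu.hasSum_log_gu_pow hcop lam (Nat.sub_ne_zero_of_lt
    (prime_of_mem_primesUpTo hp).one_lt)).congr_fun fun d => ?_
  rw [← sum_filter, sum_const, nsmul_eq_mul, mul_comm, primePiMod_one_eq_card]

lemma hasSum_rho_mul_chebErr (hu : IsLucasSequence a₁ a₂ u) (hcop : IsCoprime a₁ a₂) {lam : ℕ}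
    (hsum : Summable fun d => rho lam d / (ellu u d).totient) (x : ℝ) :
    HasSum (fun d => rho lam d * chebErr x (ellu u d) 1)
      (∑ p ∈ primesUpTo x, log (gu u (p - 1)) ^ lam -
        (∑' d, rho lam d / (ellu u d).totient) * primePi x) := by
  refine ((hu.hasSum_rho_mul_primePiMod hcop lam x).sub
    (hsum.hasSum.mul_right (primePi x : ℝ))).congr_fun fun d => ?_
  rw [chebErr]
  ring

lemma ite_rho_div_totient_ellu (hu : IsLucasSequence a₁ a₂ u) (hcop : IsCoprime a₁ a₂)
    (lam n : ℕ) :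
    (if 0 < n ∧ Int.gcd n a₂ = 1 then rho lam n / ((ellu u n).totient : ℝ) else 0) =
      rho lam n / (ellu u n).totient := by
  rw [ite_eq_left_iff, ← Int.isCoprime_iff_gcd_eq_one]
  intro h
  have hellu : ellu u n = 0 := by
    by_contra h0
    obtain ⟨hn, hz⟩ := not_or.mp (mt Nat.lcm_eq_zero_iff.mpr h0)
    obtain ⟨z, hz⟩ := Nat.exists_eq_succ_of_ne_zero hz
    have hdvd : (n : ℤ) ∣ u (z + 1) := (hu.dvd_apply_iff hcop).mpr hz.dvd
    exact h ⟨Nat.pos_of_ne_zero hn,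
      (hu.isCoprime_apply_succ_param hcop z).of_isCoprime_of_dvd_left hdvd⟩
  rw [hellu, Nat.totient_zero, Nat.cast_zero, div_zero]

lemma summable_rpow_mul_rho_div_totient_ellu (hu : IsLucasSequence a₁ a₂ u)
    (hcop : IsCoprime a₁ a₂) (hΔ : a₁ ^ 2 + 4 * a₂ ≠ 0) (hne : ∀ n ≠ 0, u n ≠ 0) {lam : ℕ}
    (hlam : lam ≠ 0) {σ : ℝ} (hσ0 : 0 ≤ σ) (hσ : σ < 1 / (2 * lam + 1)) :
    Summable fun d : ℕ => (d : ℝ) ^ σ * (rho lam d / (ellu u d).totient) := by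
  obtain ⟨B, hB⟩ := hu.exists_encard_reducedRank_fiber_le hcop hne hΔ
  exact summable_rpow_mul_rho_div_totient hB (fun p => hu.coprime_reducedRank hcop p.2)
    (fun d => Nat.dvd_lcm_left d _)
    (fun p d hpd => (hu.reducedRank_dvd_zu hcop _ hpd).trans (Nat.dvd_lcm_right d _))
    hlam hσ0 hσ

end IsLucasSequence

/-- Rankin's trick: the terms with `y < d` are weighted by `(d / y) ^ σ ≥ 1`. -/
lemma abs_le_of_hasSum_of_summable_rpow_mul {f g : ℕ → ℝ} {s y σ E M : ℝ} (hf : HasSum f s)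
    (hy : 0 < y) (hσ : 0 ≤ σ) (hE : 0 ≤ E) (h0 : f 0 = 0) (hM : 0 ≤ M) (hg0 : ∀ d, 0 ≤ g d)
    (hg : Summable fun d : ℕ => (d : ℝ) ^ σ * g d) (hfE : ∀ d : ℕ, d ≠ 0 → d ≤ y → |f d| ≤ E)
    (hfg : ∀ d, |f d| ≤ M * g d) :
    |s| ≤ y * E + M * y ^ (-σ) * ∑' d : ℕ, (d : ℝ) ^ σ * g d := by
  have htail (d : ℕ) : 0 ≤ M * y ^ (-σ) * ((d : ℝ) ^ σ * g d) :=
    mul_nonneg (by positivity) (mul_nonneg (by positivity) (hg0 d))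
  have hhead : HasSum (fun d => if d ∈ Ioc 0 ⌊y⌋₊ then E else 0) (⌊y⌋₊ * E) := by
    have hcard : ∑ d ∈ Ioc 0 ⌊y⌋₊, (if d ∈ Ioc 0 ⌊y⌋₊ then E else 0) = ⌊y⌋₊ * E := by
      rw [sum_ite_mem, inter_self, sum_const, Nat.card_Ioc, Nat.sub_zero, nsmul_eq_mul]
    exact hcard ▸ hasSum_sum_of_ne_finset_zero fun d hd => if_neg hd
  refine (hf.norm_le_of_bounded (hhead.add (hg.hasSum.mul_left (M * y ^ (-σ)))) fun d => ?_).trans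
    (add_le_add_left (mul_le_mul_of_nonneg_right (Nat.floor_le hy.le) hE) _)
  rw [norm_eq_abs]
  rcases eq_or_ne d 0 with rfl | hd
  · simpa [h0] using htail 0
  rcases le_or_gt (d : ℝ) y with hdy | hdy
  · rw [if_pos (mem_Ioc.mpr ⟨Nat.pos_of_ne_zero hd, Nat.le_floor hdy⟩)]
    linarith [hfE d hd hdy, htail d]
  · rw [if_neg fun h => hdy.not_ge ((Nat.le_floor_iff hy.le).mp (mem_Ioc.mp h).2), zero_add]
    have hone : 1 ≤ y ^ (-σ) * (d : ℝ) ^ σ := by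
      rw [rpow_neg hy.le, one_le_inv_mul₀ (by positivity)]
      gcongr
    calc |f d| ≤ M * g d * 1 := by rw [mul_one]; exact hfg d
      _ ≤ M * g d * (y ^ (-σ) * (d : ℝ) ^ σ) :=
          mul_le_mul_of_nonneg_left hone (mul_nonneg hM (hg0 d))
      _ = M * y ^ (-σ) * ((d : ℝ) ^ σ * g d) := by ring

lemma IsLucasSequence.abs_sum_log_gu_pow_sub_le (hu : IsLucasSequence a₁ a₂ u)
    (hcop : IsCoprime a₁ a₂) {lam : ℕ} {σ x y K : ℝ} (hσ : 0 ≤ σ)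
    (hsum : Summable fun d => rho lam d / (ellu u d).totient)
    (hsumσ : Summable fun d : ℕ => (d : ℝ) ^ σ * (rho lam d / (ellu u d).totient))
    (hx : 2 ≤ x) (hy : 0 < y) (hyx : y ≤ x)
    (hK : ∀ b : ℕ, 1 ≤ b → |chebErr x b 1| ≤ K * x ^ ((1 : ℝ) / 2) * log x) :
    |∑ p ∈ primesUpTo x, log (gu u (p - 1)) ^ lam -
        (∑' d, rho lam d / (ellu u d).totient) * primePi x| ≤
      y * (|K| * x ^ ((1 : ℝ) / 2) * log x ^ (lam + 1)) +
        x * y ^ (-σ) * ∑' d : ℕ, (d : ℝ) ^ σ * (rho lam d / (ellu u d).totient) := by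
  have hx0 : 0 ≤ x := by linarith
  have hlog : 0 ≤ log x := log_nonneg (by linarith)
  have htrivial (d : ℕ) : |rho lam d * chebErr x (ellu u d) 1| ≤
      x * (rho lam d / (ellu u d).totient) := by
    rw [abs_mul, abs_of_nonneg (rho_nonneg lam d), mul_div_left_comm]
    exact mul_le_mul_of_nonneg_left (abs_chebErr_one_le hx0 _) (rho_nonneg lam d)
  have hzero : rho lam 0 * chebErr x (ellu u 0) 1 = 0 :=
    abs_nonpos_iff.mp ((htrivial 0).trans_eq (by simp [ellu]))
  exact abs_le_of_hasSum_of_summable_rpow_mul (hu.hasSum_rho_mul_chebErr hcop hsum x) hy hσ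
    (by positivity) hzero hx0 (fun d => div_nonneg (rho_nonneg lam d) (Nat.cast_nonneg _)) hsumσ
    (fun d hd hdy => abs_rho_mul_chebErr_le hx hK lam hd (hdy.trans hyx) _) htrivial

/-- The two error terms balance at `θ = (2 λ + 1) / (4 λ + 4)`, `σ = 1 / (2 λ + 1)`. -/
lemma exists_rankin_exponents (lam : ℕ) {κ : ℝ} (hκ : (4 * lam + 3) / (4 * lam + 4) < κ) :
    ∃ θ σ : ℝ, 0 ≤ σ ∧ σ < 1 / (2 * lam + 1) ∧ θ ≤ 1 ∧ θ + 1 / 2 < κ ∧ 1 - θ * σ ≤ κ := by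
  set θ : ℝ := (2 * lam + 1) / (4 * lam + 4) with hθ
  set κ₀ : ℝ := (4 * lam + 3) / (4 * lam + 4) with hκ₀
  have hhead : θ + 1 / 2 = κ₀ := by
    rw [hθ, hκ₀]
    field_simp
    ring
  have htail : 1 - θ * (1 / (2 * lam + 1)) = κ₀ := by
    rw [hθ, hκ₀]
    field_simp
    ring
  have hθ0 : 0 ≤ θ := by positivity
  have hθ1 : θ ≤ 1 := (div_le_one (by positivity)).mpr (by linarith [lam.cast_nonneg (α := ℝ)])
  refine ⟨θ, max 0 (1 / (2 * lam + 1) - (κ - κ₀)), le_max_left _ _,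
    max_lt (by positivity) (by linarith), hθ1, by linarith, ?_⟩
  calc 1 - θ * max 0 (1 / (2 * lam + 1) - (κ - κ₀))
      ≤ 1 - θ * (1 / (2 * lam + 1) - (κ - κ₀)) :=
        sub_le_sub_left (mul_le_mul_of_nonneg_left (le_max_right _ _) hθ0) 1
    _ = κ₀ + θ * (κ - κ₀) := by rw [← htail]; ring
    _ ≤ κ₀ + 1 * (κ - κ₀) := by gcongr
    _ = κ := by ring

theorem statement1_general (hu : IsLucasSequence a₁ a₂ u) (hcop : IsCoprime a₁ a₂)
    (hΔ : a₁ ^ 2 + 4 * a₂ ≠ 0) (hne : ∀ n ≠ 0, u n ≠ 0) {K : ℝ}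
    (hGRH : ∀ b : ℕ, 1 ≤ b → ∀ x : ℝ, 2 ≤ x → |chebErr x b 1| ≤ K * x ^ ((1 : ℝ) / 2) * log x)
    {lam : ℕ} (hlam : lam ≠ 0) {κ : ℝ} (hκ : (4 * lam + 3) / (4 * lam + 4) < κ) :
    ∃ C : ℝ, 0 < C ∧ ∀ x : ℝ, 2 ≤ x →
      |(∑ p ∈ primesUpTo x, log (gu u (p - 1) : ℝ) ^ lam) -
          (∑' n : ℕ, if 0 < n ∧ Int.gcd (n : ℤ) a₂ = 1 then
            rho lam n / (Nat.totient (ellu u n) : ℝ) else 0) * (primePi x : ℝ)| ≤ C * x ^ κ := by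
  obtain ⟨θ, σ, hσ0, hσ, hθ, hθκ, hσκ⟩ := exists_rankin_exponents lam hκ
  have hsumσ := hu.summable_rpow_mul_rho_div_totient_ellu hcop hΔ hne hlam hσ0 hσ
  have hsum : Summable fun d => rho lam d / (ellu u d).totient := by
    simpa using hu.summable_rpow_mul_rho_div_totient_ellu hcop hΔ hne hlam le_rfl
      (by positivity : (0 : ℝ) < 1 / (2 * lam + 1))
  obtain ⟨C, hC, hlog⟩ := exists_log_pow_le_mul_rpow (lam + 1) (sub_pos.mpr hθκ)
  set S := ∑' d : ℕ, (d : ℝ) ^ σ * (rho lam d / (ellu u d).totient)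
  have hS : 0 ≤ S := tsum_nonneg fun d =>
    mul_nonneg (by positivity) (div_nonneg (rho_nonneg lam d) (Nat.cast_nonneg _))
  refine ⟨|K| * C + S + 1, by positivity, fun x hx => ?_⟩
  have hx0 : 0 < x := by linarith
  have hx1 : 1 ≤ x := by linarith
  have hhead : x ^ θ * x ^ ((1 : ℝ) / 2) * x ^ (κ - (θ + 1 / 2)) = x ^ κ := by
    rw [← rpow_add hx0, ← rpow_add hx0, add_sub_cancel]
  have htail : x * (x ^ θ) ^ (-σ) ≤ x ^ κ := by
    calc x * (x ^ θ) ^ (-σ) = x ^ (1 - θ * σ) := by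
          rw [← rpow_mul hx0.le, mul_neg, rpow_sub hx0, rpow_one, rpow_neg hx0.le, div_eq_mul_inv]
      _ ≤ x ^ κ := rpow_le_rpow_of_exponent_le hx1 hσκ
  simp only [hu.ite_rho_div_totient_ellu hcop]
  calc _ ≤ x ^ θ * (|K| * x ^ ((1 : ℝ) / 2) * log x ^ (lam + 1)) + x * (x ^ θ) ^ (-σ) * S :=
        hu.abs_sum_log_gu_pow_sub_le hcop hσ0 hsum hsumσ hx (by positivity)
          (rpow_le_self_of_one_le hx1 hθ) fun b hb => hGRH b hb x hx
    _ ≤ x ^ θ * (|K| * x ^ ((1 : ℝ) / 2) * (C * x ^ (κ - (θ + 1 / 2)))) + x ^ κ * S := by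
        gcongr
        exact hlog x hx1
    _ = (|K| * C + S) * x ^ κ := by rw [← hhead]; ring
    _ ≤ (|K| * C + S + 1) * x ^ κ := mul_le_mul_of_nonneg_right (by linarith) (by positivity)

end Moments

/-- Assuming a GRH-type bound `|Δ(x;b,1)| ≤ K·√x·log x`, for every positive
integer `λ` and `ε > 0` there is `C > 0` such that
`|Σ_{p ≤ x} (log g_u(p-1))^λ − P_{u,λ}·π(x)| ≤ C·x^{(6λ+3)/(6λ+4)+ε}` for all `x ≥ 2`. -/
theorem statement1 (a₁ a₂ : ℤ) (hcop : IsCoprime a₁ a₂) (ha₂ : a₂ ≠ 0)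
    (hΔ : a₁ ^ 2 + 4 * a₂ ≠ 0)
    (u : ℕ → ℤ) (hu0 : u 0 = 0) (hu1 : u 1 = 1)
    (hrec : ∀ n : ℕ, u (n + 2) = a₁ * u (n + 1) + a₂ * u n)
    (hnd : ∀ α β : ℂ, α ^ 2 = (a₁ : ℂ) * α + (a₂ : ℂ) →
      β ^ 2 = (a₁ : ℂ) * β + (a₂ : ℂ) → α ≠ β → ∀ k : ℕ, 0 < k → (α / β) ^ k ≠ 1)
    (K : ℝ) (hK : 0 < K)
    (hGRH : ∀ b : ℕ, 1 ≤ b → ∀ x : ℝ, 2 ≤ x →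
      |chebErr x b 1| ≤ K * x ^ ((1 : ℝ) / 2) * Real.log x)
    (lam : ℕ) (hlam : 0 < lam) (ε : ℝ) (hε : 0 < ε) :
    ∃ C : ℝ, 0 < C ∧ ∀ x : ℝ, 2 ≤ x →
      |(∑ p ∈ primesUpTo x, Real.log (gu u (p - 1) : ℝ) ^ lam) -
          (∑' n : ℕ, if 0 < n ∧ Int.gcd (n : ℤ) a₂ = 1 then
            rho lam n / (Nat.totient (ellu u n) : ℝ) else 0) * (primePi x : ℝ)| ≤
        C * x ^ ((6 * (lam : ℝ) + 3) / (6 * (lam : ℝ) + 4) + ε) := by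
  refine statement1_general ⟨hu0, hu1, hrec⟩ hcop hΔ
    (fun n hn => IsLucasSequence.apply_ne_zero ⟨hu0, hu1, hrec⟩ ha₂ hΔ hnd hn) hGRH hlam.ne' ?_
  have hexp : (4 * lam + 3 : ℝ) / (4 * lam + 4) ≤ (6 * lam + 3) / (6 * lam + 4) := by
    rw [div_le_div_iff₀ (by positivity) (by positivity)]
    nlinarith
  linarith
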